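/- Let m and n be positive composite integers and k a positive integer, and set G_{m,n,k}=(ℤ/mℤ * ℤ/nℤ)×ℤ^{2k}, where * denotes the free product. Then for every i≥1 the group cohomology H^i(G_{m,n,k},ℝ) is isomorphic to H^i(ℤ^{2k},ℝ), and G_{m,n,k} admits a non-degenerate skew structure. -/

import Mathlib

/-!  A formalization framework for "Lefschetz contact manifolds and odd dimensional
symplectic geometry" (Yi Lin).

Mathlib does not yet contain differential forms, de Rham cohomology, or contact /
Sasakian geometry.  We therefore work with a faithful algebraic model:  a `DGA N`
records the graded differential algebra of smooth differential forms on a compact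
oriented `N`-dimensional manifold, together with integration (Stokes' theorem).
Contact, K-contact and Sasakian structures are then extra structure on this algebra:
the contact form `η`, contraction `ι` with the Reeb vector field (with its defining
identities), the averaging operator over the closure of the Reeb flow (a torus of
isometries) characterizing K-contact structures, and the transverse `dᶜ`-operator
with the basic `d dᶜ`-lemma coming from the transversely Kähler structure of a
Sasakian manifold.  -/

noncomputable section

open LinearMap

attribute [local instance] Classical.propDecidable

/-- Model of the de Rham complex of a compact oriented `N`-dimensional manifold:
a graded differential `ℝ`-algebra (`deg k` is the space of smooth `k`-forms, `d` the
exterior differential, multiplication the wedge product), together with integration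
over the manifold, satisfying Stokes' theorem. -/
structure DGA (N : ℕ) where
  /-- the space of all (inhomogeneous) smooth differential forms -/
  Ω : Type
  [ringΩ : Ring Ω]
  [algΩ : Algebra ℝ Ω]
  /-- `deg k` is the space of smooth `k`-forms -/
  deg : ℕ → Submodule ℝ Ω
  one_mem : (1 : Ω) ∈ deg 0
  mul_mem : ∀ {k l : ℕ} {a b : Ω}, a ∈ deg k → b ∈ deg l → a * b ∈ deg (k + l)
  deg_eq_bot : ∀ k : ℕ, N < k → deg k = ⊥
  /-- the exterior differential -/
  d : Ω →ₗ[ℝ] Ω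
  d_mem : ∀ {k : ℕ} {a : Ω}, a ∈ deg k → d a ∈ deg (k + 1)
  d_d : ∀ a : Ω, d (d a) = 0
  d_mul : ∀ {k : ℕ} (a b : Ω), a ∈ deg k →
    d (a * b) = d a * b + ((-1 : ℝ) ^ k) • (a * d b)
  /-- integration over the (compact, oriented) manifold -/
  integral : Ω →ₗ[ℝ] ℝ
  /-- Stokes' theorem -/
  integral_d : ∀ a : Ω, integral (d a) = 0

attribute [instance] DGA.ringΩ DGA.algΩ

namespace DGA

variable {N : ℕ} (A : DGA N)

/-- closed `k`-forms -/
def closed (k : ℕ) : Submodule ℝ A.Ω := A.deg k ⊓ LinearMap.ker A.d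

/-- exact `k`-forms -/
def exact : ℕ → Submodule ℝ A.Ω
  | 0 => ⊥
  | (k + 1) => A.deg (k + 1) ⊓ Submodule.map A.d (A.deg k)

/-- the `k`-th de Rham cohomology group `H^k(M, ℝ)` -/
def H (k : ℕ) : Type :=
  A.closed k ⧸ ((A.exact k).comap (A.closed k).subtype)

instance (k : ℕ) : AddCommGroup (A.H k) :=
  inferInstanceAs (AddCommGroup (A.closed k ⧸ ((A.exact k).comap (A.closed k).subtype)))

instance (k : ℕ) : Module ℝ (A.H k) :=
  inferInstanceAs (Module ℝ (A.closed k ⧸ ((A.exact k).comap (A.closed k).subtype)))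

/-- the de Rham cohomology class of a closed `k`-form (junk value `0` on non-closed
forms) -/
def Hcls (k : ℕ) (a : A.Ω) : A.H k :=
  if h : a ∈ A.closed k then
    (Submodule.Quotient.mk (⟨a, h⟩ : A.closed k) : A.H k)
  else 0

/-- a representative closed form for a de Rham cohomology class -/
def Hrep {k : ℕ} (x : A.H k) : A.closed k :=
  (Submodule.Quotient.mk_surjective ((A.exact k).comap (A.closed k).subtype) x).choose

/-- transport of cohomology along an equality of degrees -/
def castH {k l : ℕ} (h : k = l) : A.H k ≃ₗ[ℝ] A.H l := by
  subst h; exact LinearEquiv.refl ℝ (A.H k)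

/-- the cup product on de Rham cohomology, induced by the wedge product of forms -/
def cup (k l : ℕ) (x : A.H k) (y : A.H l) : A.H (k + l) :=
  A.Hcls (k + l) ((A.Hrep x).1 * (A.Hrep y).1)

/-- integration of a de Rham cohomology class over the manifold -/
def intH {k : ℕ} (x : A.H k) : ℝ := A.integral (A.Hrep x).1

/-- the map induced on de Rham cohomology by a morphism of form algebras
(e.g. the pullback along a smooth map) -/
def mapH {N' : ℕ} (B : DGA N') (f : A.Ω →ₐ[ℝ] B.Ω) (k : ℕ) (x : A.H k) : B.H k :=
  B.Hcls k (f (A.Hrep x).1)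

end DGA

/-! ### Low-degree group cohomology with trivial real coefficients

`H^1(G,ℝ)` is the space of homomorphisms `G → ℝ` and `H^2(G,ℝ)` is defined by
inhomogeneous 2-cocycles modulo coboundaries, together with the cup product
`H^1 × H^1 → H^2` and the notion of a non-degenerate skew structure on a discrete
group in the sense of Johnson–Rees. -/

/-- additive homomorphisms `G → ℝ`; this is the group cohomology `H^1(G, ℝ)` with
trivial coefficients -/
def grpH1 (G : Type) [Group G] : Submodule ℝ (G → ℝ) where
  carrier := {f | ∀ g h : G, f (g * h) = f g + f h}
  add_mem' := by
    intro a b ha hb g h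
    simp only [Pi.add_apply, ha g h, hb g h]; ring
  zero_mem' := by intro g h; simp
  smul_mem' := by
    intro c a ha g h
    simp only [Pi.smul_apply, smul_eq_mul, ha g h]; ring

/-- the group cohomology `H^1(G,ℝ)` with trivial real coefficients -/
def GH1 (G : Type) [Group G] : Type := grpH1 G

instance (G : Type) [Group G] : AddCommGroup (GH1 G) :=
  inferInstanceAs (AddCommGroup (grpH1 G))

instance (G : Type) [Group G] : Module ℝ (GH1 G) :=
  inferInstanceAs (Module ℝ (grpH1 G))

/-- inhomogeneous 2-cocycles on `G` with values in the trivial module `ℝ` -/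
def grpZ2 (G : Type) [Group G] : Submodule ℝ (G → G → ℝ) where
  carrier := {c | ∀ g h j : G, c h j - c (g * h) j + c g (h * j) - c g h = 0}
  add_mem' := by
    intro a b ha hb g h j
    have h1 := ha g h j
    have h2 := hb g h j
    simp only [Pi.add_apply]
    linarith
  zero_mem' := by intro g h j; simp
  smul_mem' := by
    intro c a ha g h j
    have h1 := ha g h j
    simp only [Pi.smul_apply, smul_eq_mul]
    linear_combination c * h1

/-- the coboundary map `(δ f)(g,h) = f(h) - f(gh) + f(g)` -/
def grpδ (G : Type) [Group G] : (G → ℝ) →ₗ[ℝ] (G → G → ℝ) where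
  toFun f := fun g h => f h - f (g * h) + f g
  map_add' := by intro a b; funext g h; simp only [Pi.add_apply]; ring
  map_smul' := by
    intro c a; funext g h
    simp only [Pi.smul_apply, smul_eq_mul, RingHom.id_apply]; ring

/-- inhomogeneous 2-coboundaries -/
def grpB2 (G : Type) [Group G] : Submodule ℝ (G → G → ℝ) := LinearMap.range (grpδ G)

/-- the group cohomology `H^2(G,ℝ)` with trivial real coefficients:
2-cocycles modulo 2-coboundaries -/
def GH2 (G : Type) [Group G] : Type :=
  grpZ2 G ⧸ ((grpB2 G).comap (grpZ2 G).subtype)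

instance (G : Type) [Group G] : AddCommGroup (GH2 G) :=
  inferInstanceAs (AddCommGroup (grpZ2 G ⧸ ((grpB2 G).comap (grpZ2 G).subtype)))

instance (G : Type) [Group G] : Module ℝ (GH2 G) :=
  inferInstanceAs (Module ℝ (grpZ2 G ⧸ ((grpB2 G).comap (grpZ2 G).subtype)))

/-- the cup product `H^1(G,ℝ) × H^1(G,ℝ) → H^2(G,ℝ)`, induced by
`(a ∪ b)(g,h) = a(g)·b(h)` -/
def gcup {G : Type} [Group G] (a b : GH1 G) : GH2 G :=
  Submodule.Quotient.mk (⟨fun g h => a.1 g * b.1 h, by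
    intro g h j
    have ha : ∀ g h : G, a.1 (g * h) = a.1 g + a.1 h := a.2
    have hb : ∀ g h : G, b.1 (g * h) = b.1 g + b.1 h := b.2
    simp only []
    rw [ha g h, hb h j]; ring⟩ : grpZ2 G)

/-- A non-degenerate skew structure on a discrete group `G` (Johnson–Rees):
a non-degenerate skew-symmetric bilinear form on `H^1(G,ℝ)` which factors through
the cup product, i.e. is of the form `⟨a,b⟩ = σ(a ∪ b)` for a linear functional
`σ : H^2(G,ℝ) → ℝ`. -/
def HasNondegSkewStructure (G : Type) [Group G] : Prop :=
  ∃ σ : GH2 G →ₗ[ℝ] ℝ,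
    (∀ a b : GH1 G, σ (gcup a b) = -σ (gcup b a)) ∧
    (∀ a : GH1 G, a ≠ 0 → ∃ b : GH1 G, σ (gcup a b) ≠ 0)

/-!
A finite group whose order is invertible in `k` has no cohomology in degree one, by averaging.
A one-cocycle on `A ∗ B` is the same as a pair of one-cocycles on `A` and `B`: cocycles are actions
by affine maps with prescribed linear part, and such actions glue by the universal property. If
`A` and `B` have no first cohomology, cocycles on them are coboundaries, so they lift along
surjections of coefficients; hence `H¹` of `A ∗ B` is right exact. Embedding a module into a
coinduced one, this yields `H² = 0`, and dimension shifting gives `Hⁱ = 0` for all `i ≥ 2`. For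
trivial coefficients also `H¹ = 0`, so that `A ∗ B` is acyclic.

If `φ : G → L` is surjective with acyclic kernel, then a module coinduced from the trivial subgroup
of `L` becomes, over `G`, coinduced from a trivial module over `ker φ`, hence stays acyclic.
Comparing the long exact sequences over `L` and `G` shows that inflation `Hⁱ(L, V) → Hⁱ(G, V)` is
an isomorphism, by induction on `i`.

A commuting pair `g, h` in `G` is a torus in `BG`, on which a two-cocycle `c` evaluates to
`c(g, h) - c(h, g)`. Pairing up the standard generators of `ℤ^{2k}`, the sum of these evaluations
turns the cup product into the standard symplectic form on `H¹ = ℝ^{2k}`.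
-/

namespace AcyclicExtension

open CategoryTheory CategoryTheory.Limits groupCohomology
open Monoid (Coprod)

universe u

section CoinducedResolution

variable {k G : Type u} [CommRing k] [Group G]

/-- The representation of `G` on all functions `G → V`, coinduced from the trivial subgroup. It has
no higher cohomology and is used for dimension shifting. -/
abbrev coinducedRep (V : Rep.{u} k G) : Rep.{u} k G :=
  Rep.coind (⊥ : Subgroup G).subtype (Rep.res (⊥ : Subgroup G).subtype V)

/-- The embedding of a representation `V` into the functions `G → V`, given by orbit maps. -/
def toCoinduced (V : Rep.{u} k G) : V ⟶ coinducedRep V :=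
  Rep.resCoindToHom _ V _ (𝟙 _)

instance (V : Rep.{u} k G) : Mono (toCoinduced V) := by
  rw [Rep.mono_iff_injective]
  intro v w h
  have hone : V.ρ 1 v = V.ρ 1 w := congrFun (congrArg Subtype.val h) (1 : G)
  simpa using hone

/-- The short exact sequence `V ⟶ (G → V) ⟶ (G → V) / V` that raises the degree of cohomology
by one. -/
abbrev coinducedSES (V : Rep.{u} k G) : ShortComplex (Rep.{u} k G) :=
  ShortComplex.mk (toCoinduced V) (cokernel.π _) (cokernel.condition _)

lemma coinducedSES_shortExact (V : Rep.{u} k G) : (coinducedSES V).ShortExact where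
  exact := ShortComplex.exact_cokernel _
  mono_f := inferInstanceAs (Mono (toCoinduced V))
  epi_g := inferInstanceAs (Epi (cokernel.π (toCoinduced V)))

lemma isZero_groupCohomology_coinducedRep (V : Rep.{u} k G) (i : ℕ) :
    IsZero (groupCohomology (coinducedRep V) (i + 1)) :=
  (isZero_groupCohomology_succ_of_subsingleton _ _).of_iso (coindIso _ _)

lemma isZero_groupCohomology_X₁_of_epi {X : ShortComplex (Rep.{u} k G)} (hX : X.ShortExact)
    (i : ℕ) [Epi (map (MonoidHom.id G) X.g i)] (h : IsZero (groupCohomology X.X₂ (i + 1))) :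
    IsZero (groupCohomology X.X₁ (i + 1)) := by
  have hcomp : map (MonoidHom.id G) X.g i ≫ δ hX i (i + 1) rfl = 0 :=
    (mapShortComplex₃ hX rfl).zero
  have hδ : δ hX i (i + 1) rfl = 0 := zero_of_epi_comp _ hcomp
  have := epi_δ_of_isZero hX i h
  exact IsZero.of_epi_eq_zero (δ hX i (i + 1) rfl) hδ

lemma isZero_groupCohomology_add {n : ℕ}
    (h : ∀ M : Rep.{u} k G, IsZero (groupCohomology M (n + 1))) (M : Rep.{u} k G) (i : ℕ) :
    IsZero (groupCohomology M (i + n + 1)) := by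
  induction i generalizing M with
  | zero => simpa only [Nat.zero_add] using h M
  | succ i ih =>
    rw [Nat.add_right_comm i 1]
    have := epi_δ_of_isZero (coinducedSES_shortExact M) (i + n + 1)
      (isZero_groupCohomology_coinducedRep M _)
    exact IsZero.of_epi (δ (coinducedSES_shortExact M) (i + n + 1) _ rfl) (ih _)

end CoinducedResolution

section Acyclic

/-- A group is acyclic over `k` if its cohomology with coefficients in any trivial `k`-module
vanishes in positive degrees. -/
def IsAcyclic (k S : Type u) [CommRing k] [Group S] : Prop :=
  ∀ (V : Type u) [AddCommGroup V] [Module k V] (i : ℕ),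
    IsZero (groupCohomology (Rep.trivial k S V) (i + 1))

lemma IsAcyclic.of_mulEquiv {k S T : Type u} [CommRing k] [Group S] [Group T] (e : S ≃* T)
    (hT : IsAcyclic k T) : IsAcyclic k S := fun V _ _ i =>
  (hT V i).of_iso (groupCohomology.mapIso (A := Rep.trivial k T V) (B := Rep.trivial k S V)
    e (.refl k V) (fun _ => rfl) _)

end Acyclic

section Inflation

variable {k G L : Type u} [CommRing k] [Group G] [Group L]

lemma comp_mem_coindV_ker (φ : G →* L) {V : Type u} [AddCommGroup V] [Module k V] (f : L → V) :
    f ∘ φ ∈ Representation.coindV φ.ker.subtype (Representation.trivial k φ.ker V) := by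
  intro s h
  have hs : φ s = 1 := s.2
  simp [hs]

lemma exists_comp_eq_of_mem_coindV_ker {φ : G →* L} (hφ : Function.Surjective φ) {V : Type u}
    [AddCommGroup V] [Module k V] {f : G → V}
    (hf : f ∈ Representation.coindV φ.ker.subtype (Representation.trivial k φ.ker V)) :
    ∃ f' : L → V, f' ∘ φ = f := by
  refine ⟨f ∘ Function.surjInv hφ, funext fun g => ?_⟩
  have hker : φ (g * (Function.surjInv hφ (φ g))⁻¹) = 1 := by
    simp [Function.surjInv_eq hφ]
  simpa using (hf ⟨_, hker⟩ (Function.surjInv hφ (φ g))).symm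

/-- For a surjection `φ : G →* L`, the functions `L → V` are, through composition with `φ`, the
functions `G → V` invariant under `φ.ker`. The group acts by translating the argument, so the
action of `L` on `V` itself does not enter either representation. -/
def resCoinducedRepIso {φ : G →* L} (hφ : Function.Surjective φ) (V : Rep.{u} k L) :
    Rep.res φ (coinducedRep V) ≅ Rep.coind φ.ker.subtype (Rep.trivial k φ.ker V) :=
  Rep.mkIso (ρ := (coinducedRep V).ρ.comp φ) <| .mk
    (LinearEquiv.ofBijective
      (LinearMap.codRestrict _ (LinearMap.funLeft k V φ ∘ₗ Submodule.subtype _)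
        fun f => comp_mem_coindV_ker φ f.1)
      ⟨fun f f' h => Subtype.ext (hφ.injective_comp_right (congrArg Subtype.val h)),
        fun ⟨f, hf⟩ => by
          obtain ⟨f', rfl⟩ := exists_comp_eq_of_mem_coindV_ker hφ hf
          refine ⟨⟨f', ?_⟩, rfl⟩
          rintro ⟨_, rfl⟩ h
          simp⟩)
    fun h => by
      ext f x
      simp [LinearMap.funLeft]

lemma isZero_groupCohomology_res_coinducedRep {φ : G →* L} (hφ : Function.Surjective φ)
    (hker : IsAcyclic k φ.ker) (V : Rep.{u} k L) (i : ℕ) :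
    IsZero (groupCohomology (Rep.res φ (coinducedRep V)) (i + 1)) :=
  (hker V i).of_iso
    ((groupCohomology.functor k G (i + 1)).mapIso (resCoinducedRepIso hφ V) ≪≫ coindIso _ _)

/-- Inflation of inhomogeneous cochains along `φ`, natural in the coefficients. -/
def inflCochains (φ : G →* L) :
    cochainsFunctor k L ⟶ Rep.resFunctor φ ⋙ cochainsFunctor k G where
  app V := cochainsMap φ (𝟙 (Rep.res φ V))
  naturality _ _ f := by
    ext i x
    rfl

/-- Inflation `Hⁱ(L, V) ⟶ Hⁱ(G, V)` along `φ : G →* L`, natural in the coefficients. -/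
def inflation (φ : G →* L) (i : ℕ) :
    groupCohomology.functor k L i ⟶ Rep.resFunctor φ ⋙ groupCohomology.functor k G i where
  app V := map φ (𝟙 (Rep.res φ V)) i
  naturality _ _ f := (HomologicalComplex.homologyMap_comp _ _ _).symm.trans
    ((congrArg (HomologicalComplex.homologyMap · i) ((inflCochains φ).naturality f)).trans
      (HomologicalComplex.homologyMap_comp _ _ _))

lemma δ_comp_inflation (φ : G →* L) {X : ShortComplex (Rep.{u} k L)} (hX : X.ShortExact)
    {i j : ℕ} (hij : i + 1 = j) :
    δ hX i j hij ≫ (inflation φ j).app X.X₁ =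
      (inflation φ i).app X.X₃ ≫ δ ((Rep.shortExact_res φ).2 hX) i j hij :=
  HomologicalComplex.HomologySequence.δ_naturality (X.mapNatTrans (inflCochains φ)) _ _ i j hij

lemma isIso_inflation_zero {φ : G →* L} (hφ : Function.Surjective φ) (V : Rep.{u} k L) :
    IsIso ((inflation φ 0).app V) := by
  have hcomp (x : groupCohomology V 0) :
      ((H0Iso (Rep.res φ V)).hom ((inflation φ 0).app V x) : V) = (H0Iso V).hom x :=
    congr($(map_H0Iso_hom_f φ (𝟙 (Rep.res φ V))) x)
  rw [ConcreteCategory.isIso_iff_bijective]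
  refine ⟨fun x y hxy => (H0Iso V).toLinearEquiv.injective (Subtype.ext ?_), fun y => ?_⟩
  · calc ((H0Iso V).hom x : V)
        = (H0Iso (Rep.res φ V)).hom ((inflation φ 0).app V x) := (hcomp x).symm
      _ = (H0Iso (Rep.res φ V)).hom ((inflation φ 0).app V y) := by rw [hxy]
      _ = (H0Iso V).hom y := hcomp y
  · let v := (H0Iso (Rep.res φ V)).hom y
    have hv : (v : V) ∈ V.ρ.invariants := hφ.forall.2 v.2
    refine ⟨(H0Iso V).inv ⟨v, hv⟩, (H0Iso (Rep.res φ V)).toLinearEquiv.injective (Subtype.ext ?_)⟩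
    exact (hcomp _).trans (congrArg Subtype.val congr($((H0Iso V).inv_hom_id) ⟨v, hv⟩))

lemma isIso_τ₃_of_isIso {C : Type*} [Category* C] [Abelian C] {R₁ R₂ : ShortComplex C}
    (ψ : R₁ ⟶ R₂) (hR₁ : R₁.Exact) (hR₂ : R₂.Exact) (hg₁ : Epi R₁.g) (hg₂ : Epi R₂.g)
    [IsIso ψ.τ₁] [IsIso ψ.τ₂] : IsIso ψ.τ₃ :=
  Abelian.isIso_of_epi_of_isIso (ShortComplex.mapToComposableArrows ψ)
    hR₁.exact_toComposableArrows hR₂.exact_toComposableArrows hg₁ hg₂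
    (inferInstanceAs (Epi ψ.τ₁)) ‹_›

theorem isIso_inflation {φ : G →* L} (hφ : Function.Surjective φ) (hker : IsAcyclic k φ.ker)
    (i : ℕ) (V : Rep.{u} k L) : IsIso ((inflation φ i).app V) := by
  induction i generalizing V with
  | zero => exact isIso_inflation_zero hφ V
  | succ i ih =>
    have hL := coinducedSES_shortExact V
    have hG := (Rep.shortExact_res φ).2 hL
    let ψ : mapShortComplex₃ (k := k) hL (i := i) rfl ⟶ mapShortComplex₃ hG (i := i) rfl :=
      { τ₁ := (inflation φ i).app _
        τ₂ := (inflation φ i).app _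
        τ₃ := (inflation φ (i + 1)).app V
        comm₁₂ := ((inflation φ i).naturality _).symm
        comm₂₃ := (δ_comp_inflation φ hL rfl).symm }
    have : IsIso ψ.τ₁ := ih (coinducedRep V)
    have : IsIso ψ.τ₂ := ih (coinducedSES V).X₃
    exact isIso_τ₃_of_isIso ψ (mapShortComplex₃_exact hL rfl) (mapShortComplex₃_exact hG rfl)
      (epi_δ_of_isZero hL i (isZero_groupCohomology_coinducedRep V i))
      (epi_δ_of_isZero hG i (isZero_groupCohomology_res_coinducedRep hφ hker V i))

/-- The kernel of the second projection `S × L →* L` is `S`. -/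
def kerSndEquiv (S L : Type*) [Group S] [Group L] : (MonoidHom.snd S L).ker ≃* S :=
  (MulEquiv.subgroupCongr MonoidHom.ker_snd).trans <| (Subgroup.prodEquiv _ _).trans <|
    (Subgroup.topEquiv.prodCongr (.refl _)).trans .prodUnique

/-- An acyclic direct factor does not contribute to cohomology; the isomorphism is the inverse of
inflation. -/
def groupCohomologyResSndEquiv {S : Type u} [Group S] (hS : IsAcyclic k S) (V : Rep.{u} k L)
    (i : ℕ) : groupCohomology (Rep.res (MonoidHom.snd S L) V) i ≃ₗ[k] groupCohomology V i :=
  have := isIso_inflation Prod.snd_surjective (hS.of_mulEquiv (kerSndEquiv S L)) i V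
  (asIso ((inflation (MonoidHom.snd S L) i).app V)).toLinearEquiv.symm

end Inflation

section OneCocycles

variable {k G H : Type u} [CommRing k] [Group G] [Group H]

lemma cocycles₁_map_mul {M : Rep.{u} k G} (z : cocycles₁ M) (g h : G) :
    z (g * h) = M.ρ g (z h) + z g :=
  (mem_cocycles₁_iff _).1 z.2 g h

lemma comp_mem_cocycles₁ {M : Rep.{u} k G} (f : H →* G) (z : cocycles₁ M) :
    z ∘ f ∈ cocycles₁ (Rep.res f M) :=
  (mem_cocycles₁_iff _).2 fun g h => by simp [cocycles₁_map_mul]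

lemma exists_apply_eq_ρ_sub (f : H →* G) {M : Rep.{u} k G}
    (h : IsZero (groupCohomology (Rep.res f M) 1)) (z : cocycles₁ M) :
    ∃ q : M, ∀ x, z (f x) = M.ρ (f x) q - q := by
  let zf : cocycles₁ (Rep.res f M) := ⟨z ∘ f, comp_mem_cocycles₁ f z⟩
  have := ModuleCat.isZero_iff_subsingleton.1 h
  obtain ⟨q, hq⟩ := (H1π_eq_zero_iff zf).1 (Subsingleton.elim _ _)
  exact ⟨q, fun x => (congrFun hq x).symm⟩

lemma exists_lift_cocycles₁_res (f : H →* G) {M N : Rep.{u} k G} (p : M ⟶ N) [Epi p]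
    (h : IsZero (groupCohomology (Rep.res f N) 1)) (z : cocycles₁ N) :
    ∃ y : cocycles₁ (Rep.res f M), ∀ x, p.hom (y x) = z (f x) := by
  obtain ⟨q, hq⟩ := exists_apply_eq_ρ_sub f h z
  obtain ⟨c, rfl⟩ := (Rep.epi_iff_surjective p).1 ‹_› q
  refine ⟨⟨d₀₁ _ c, d₀₁_apply_mem_cocycles₁ (A := Rep.res f M) c⟩, fun x => ?_⟩
  change p.hom (M.ρ (f x) c - c) = z (f x)
  rw [hq, map_sub, Rep.hom_comm_apply]

/-- A one-cocycle `z` with values in `M`, viewed as the action `g ↦ (x ↦ g • x + z g)` of `G` on `M`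
by affine maps. -/
def affineAction {M : Rep.{u} k G} (z : cocycles₁ M) : G →* (M →ᵃ[k] M) where
  toFun g := (M.ρ g).toAffineMap + AffineMap.const k M (z g)
  map_one' := by ext x; simp
  map_mul' g h := by
    ext x
    simp [cocycles₁_map_mul, add_assoc]

lemma apply_zero_mem_cocycles₁ {M : Rep.{u} k G} (F : G →* (M →ᵃ[k] M))
    (hF : AffineMap.linearHom.comp F = M.ρ) : (fun g => F g 0) ∈ cocycles₁ M := by
  rw [mem_cocycles₁_iff]
  intro g h
  calc F (g * h) 0 = F g (F h 0) := by rw [map_mul]; rfl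
    _ = (F g).linear (F h 0) + F g 0 := congrFun (F g).decomp _
    _ = M.ρ g (F h 0) + F g 0 := by rw [← hF]; rfl

lemma isZero_groupCohomology_one_of_finite [Finite G] (hG : IsUnit (Nat.card G : k))
    (M : Rep.{u} k G) : IsZero (groupCohomology M 1) := by
  have := Fintype.ofFinite G
  obtain ⟨c, hc⟩ := hG.exists_left_inv
  rw [ModuleCat.isZero_iff_subsingleton]
  refine subsingleton_of_forall_eq 0 fun x => ?_
  induction x using H1_induction_on with | h z
  refine (H1π_eq_zero_iff z).2 ⟨-(c • ∑ h, z h), funext fun g => ?_⟩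
  have hsum : ∑ h, z h = M.ρ g (∑ h, z h) + (Nat.card G : k) • z g :=
    calc ∑ h, z h = ∑ h, z (g * h) := (Equiv.sum_comp (Equiv.mulLeft g) _).symm
      _ = ∑ h, (M.ρ g (z h) + z g) := by simp only [cocycles₁_map_mul]
      _ = M.ρ g (∑ h, z h) + (Nat.card G : k) • z g := by
        rw [Finset.sum_add_distrib, map_sum, Finset.sum_const, Finset.card_univ,
          Nat.card_eq_fintype_card, Nat.cast_smul_eq_nsmul]
  calc M.ρ g (-(c • ∑ h, z h)) - -(c • ∑ h, z h)
      = c • (∑ h, z h - M.ρ g (∑ h, z h)) := by rw [map_neg, map_smul, smul_sub]; abel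
    _ = z g := by rw [sub_eq_iff_eq_add'.2 hsum, smul_smul, hc, one_smul]

end OneCocycles

section FreeProduct

variable {k A B : Type u} [CommRing k] [Group A] [Group B]

lemma exists_cocycles₁_coprod (M : Rep.{u} k (Coprod A B))
    (a : cocycles₁ (Rep.res Coprod.inl M)) (b : cocycles₁ (Rep.res Coprod.inr M)) :
    ∃ z : cocycles₁ M, (∀ x, z (Coprod.inl x) = a x) ∧ ∀ y, z (Coprod.inr y) = b y := by
  let F : Coprod A B →* (M →ᵃ[k] M) := Coprod.lift (affineAction a) (affineAction b)
  have hF : AffineMap.linearHom.comp F = M.ρ := by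
    ext <;> simp [F, affineAction]
  refine ⟨⟨_, apply_zero_mem_cocycles₁ F hF⟩, fun x => ?_, fun y => ?_⟩
  · change F (Coprod.inl x) 0 = _
    simp [F, affineAction]
  · change F (Coprod.inr y) 0 = _
    simp [F, affineAction]

lemma cocycles₁_coprod_ext {M : Rep.{u} k (Coprod A B)} {z w : cocycles₁ M}
    (hinl : ∀ a, z (Coprod.inl a) = w (Coprod.inl a))
    (hinr : ∀ b, z (Coprod.inr b) = w (Coprod.inr b)) : z = w := by
  refine cocycles₁_ext fun s => ?_
  induction s using Coprod.induction_on with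
  | inl a => exact hinl a
  | inr b => exact hinr b
  | mul s t hs ht => rw [cocycles₁_map_mul, cocycles₁_map_mul, hs, ht]

lemma exists_lift_cocycles₁_coprod (hA : ∀ M : Rep.{u} k A, IsZero (groupCohomology M 1))
    (hB : ∀ M : Rep.{u} k B, IsZero (groupCohomology M 1))
    {M N : Rep.{u} k (Coprod A B)} (p : M ⟶ N) [Epi p] (z : cocycles₁ N) :
    ∃ y : cocycles₁ M, mapCocycles₁ (MonoidHom.id _) p y = z := by
  obtain ⟨a, ha⟩ := exists_lift_cocycles₁_res Coprod.inl p (hA _) z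
  obtain ⟨b, hb⟩ := exists_lift_cocycles₁_res Coprod.inr p (hB _) z
  obtain ⟨y, hya, hyb⟩ := exists_cocycles₁_coprod M a b
  exact ⟨y, cocycles₁_coprod_ext (fun x => (congrArg p.hom (hya x)).trans (ha x))
    fun x => (congrArg p.hom (hyb x)).trans (hb x)⟩

lemma epi_map_H1_coprod (hA : ∀ M : Rep.{u} k A, IsZero (groupCohomology M 1))
    (hB : ∀ M : Rep.{u} k B, IsZero (groupCohomology M 1))
    {M N : Rep.{u} k (Coprod A B)} (p : M ⟶ N) [Epi p] :
    Epi (map (MonoidHom.id _) p 1) := by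
  rw [ModuleCat.epi_iff_surjective]
  intro x
  induction x using H1_induction_on with | h z
  obtain ⟨y, rfl⟩ := exists_lift_cocycles₁_coprod hA hB p z
  exact ⟨H1π M y, H1π_comp_map_apply _ _ _⟩

lemma isZero_groupCohomology_two_coprod (hA : ∀ M : Rep.{u} k A, IsZero (groupCohomology M 1))
    (hB : ∀ M : Rep.{u} k B, IsZero (groupCohomology M 1)) (M : Rep.{u} k (Coprod A B)) :
    IsZero (groupCohomology M 2) := by
  have hX := coinducedSES_shortExact M
  have := hX.epi_g
  have := epi_map_H1_coprod hA hB (coinducedSES M).g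
  exact isZero_groupCohomology_X₁_of_epi hX 1 (isZero_groupCohomology_coinducedRep M 1)

lemma isZero_H1_trivial_coprod (hA : ∀ M : Rep.{u} k A, IsZero (groupCohomology M 1))
    (hB : ∀ M : Rep.{u} k B, IsZero (groupCohomology M 1)) (V : Type u) [AddCommGroup V]
    [Module k V] : IsZero (groupCohomology (Rep.trivial k (Coprod A B) V) 1) := by
  rw [ModuleCat.isZero_iff_subsingleton]
  refine subsingleton_of_forall_eq 0 fun x => ?_
  induction x using H1_induction_on with | h z
  obtain ⟨q, hq⟩ := exists_apply_eq_ρ_sub Coprod.inl (hA _) z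
  obtain ⟨r, hr⟩ := exists_apply_eq_ρ_sub Coprod.inr (hB _) z
  have hz : z = 0 := cocycles₁_coprod_ext (fun a => (hq a).trans (sub_self q))
    fun b => (hr b).trans (sub_self r)
  rw [hz, map_zero]

theorem isAcyclic_coprod (hA : ∀ M : Rep.{u} k A, IsZero (groupCohomology M 1))
    (hB : ∀ M : Rep.{u} k B, IsZero (groupCohomology M 1)) : IsAcyclic k (Coprod A B)
  | V, _, _, 0 => isZero_H1_trivial_coprod hA hB V
  | _, _, _, i + 1 => isZero_groupCohomology_add (isZero_groupCohomology_two_coprod hA hB) _ i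

theorem isAcyclic_coprod_of_finite [Finite A] [Finite B] (hA : IsUnit (Nat.card A : k))
    (hB : IsUnit (Nat.card B : k)) : IsAcyclic k (Coprod A B) :=
  isAcyclic_coprod (isZero_groupCohomology_one_of_finite hA)
    (isZero_groupCohomology_one_of_finite hB)

end FreeProduct

section SkewStructure

variable {G : Type} [Group G]

/-- Evaluation of classes in `H²(G, ℝ)` on the two-torus spanned by a commuting pair. -/
def torusPairing (g h : G) (hgh : Commute g h) : GH2 G →ₗ[ℝ] ℝ :=
  let ev (g h : G) : (G → G → ℝ) →ₗ[ℝ] ℝ := LinearMap.proj h ∘ₗ LinearMap.proj g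
  Submodule.liftQ _ ((ev g h - ev h g) ∘ₗ (grpZ2 G).subtype) <| by
    rintro c ⟨f, hf⟩
    change c.1 g h - c.1 h g = 0
    rw [← show grpδ G f = c.1 from hf]
    change f h - f (g * h) + f g - (f g - f (h * g) + f h) = 0
    rw [hgh.eq]
    ring

lemma torusPairing_gcup {g h : G} (hgh : Commute g h) (a b : GH1 G) :
    torusPairing g h hgh (gcup a b) = a.1 g * b.1 h - a.1 h * b.1 g :=
  rfl

theorem hasNondegSkewStructure_of_commute {ι : Type*} [Finite ι] {p q : ι → G}
    (hpq : ∀ j, Commute (p j) (q j)) {x y : ι → GH1 G}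
    (hxp : ∀ i j, (x i).1 (p j) = if i = j then 1 else 0) (hxq : ∀ i j, (x i).1 (q j) = 0)
    (hyp : ∀ i j, (y i).1 (p j) = 0) (hyq : ∀ i j, (y i).1 (q j) = if i = j then 1 else 0)
    (hext : ∀ a : GH1 G, (∀ j, a.1 (p j) = 0) → (∀ j, a.1 (q j) = 0) → a = 0) :
    HasNondegSkewStructure G := by
  have := Fintype.ofFinite ι
  let σ : GH2 G →ₗ[ℝ] ℝ := ∑ j, torusPairing (p j) (q j) (hpq j)
  have hσ (a b : GH1 G) : σ (gcup a b) = ∑ j, (a.1 (p j) * b.1 (q j) - a.1 (q j) * b.1 (p j)) := by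
    simp only [σ, LinearMap.sum_apply, torusPairing_gcup]
  have hσx (a : GH1 G) (i : ι) : σ (gcup a (x i)) = -a.1 (q i) := by simp [hσ, hxp, hxq]
  have hσy (a : GH1 G) (i : ι) : σ (gcup a (y i)) = a.1 (p i) := by simp [hσ, hyp, hyq]
  refine ⟨σ, fun a b => ?_, fun a ha => ?_⟩
  · rw [hσ, hσ, ← Finset.sum_neg_distrib]
    exact Finset.sum_congr rfl fun j _ => by ring
  · contrapose! ha
    exact hext a (fun j => by rw [← hσy, ha]) fun j => by rw [← neg_eq_zero, ← hσx, ha]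

/-- A class in `H¹(G, ℝ)` as a homomorphism from `G` to the additive group `ℝ`. -/
def toMonoidHom (a : GH1 G) : G →* Multiplicative ℝ :=
  MonoidHom.mk' (fun g => .ofAdd (a.1 g)) a.2

lemma toMonoidHom_injective :
    Function.Injective (toMonoidHom : GH1 G → G →* Multiplicative ℝ) :=
  fun _ _ h => Subtype.ext (congrArg DFunLike.coe h)

instance subsingleton_monoidHom_of_finite {A M : Type*} [Group A] [Finite A] [Monoid M]
    [IsMulTorsionFree M] : Subsingleton (A →* M) :=
  subsingleton_of_forall_eq 1 fun f => MonoidHom.ext fun a =>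
    (f.isOfFinOrder (isOfFinOrder_of_finite a)).eq_one'

instance subsingleton_monoidHom_coprod {A B M : Type*} [Monoid A] [Monoid B] [Monoid M]
    [Subsingleton (A →* M)] [Subsingleton (B →* M)] : Subsingleton (Coprod A B →* M) :=
  ⟨fun _ _ => Coprod.hom_ext (Subsingleton.elim _ _) (Subsingleton.elim _ _)⟩

variable {S κ : Type} [Group S]

/-- The standard generator of the factor `ℤ^κ` of `S × ℤ^κ` with index `t`. -/
def basisElem (S : Type) [Group S] (t : κ) : S × Multiplicative (κ → ℤ) :=
  (1, .ofAdd (Pi.single t 1))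

/-- The class in `H¹(S × ℤ^κ, ℝ)` of the coordinate `t` of `ℤ^κ`. -/
def coordClass (S : Type) [Group S] (t : κ) : GH1 (S × Multiplicative (κ → ℤ)) :=
  ⟨fun g => (g.2.toAdd t : ℤ), fun g h => Int.cast_add (g.2.toAdd t) (h.2.toAdd t)⟩

lemma coordClass_basisElem (s t : κ) :
    (coordClass S s).1 (basisElem S t) = if s = t then 1 else 0 := by
  simp [coordClass, basisElem, Pi.single_apply]

lemma eq_zero_of_apply_basisElem [Finite κ] [Subsingleton (S →* Multiplicative ℝ)]
    {a : GH1 (S × Multiplicative (κ → ℤ))} (ha : ∀ t, a.1 (basisElem S t) = 0) : a = 0 := by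
  have hS : (toMonoidHom a).comp (MonoidHom.inl S (Multiplicative (κ → ℤ))) = 1 :=
    Subsingleton.elim _ _
  have hκ : (toMonoidHom a).comp (MonoidHom.inr S (Multiplicative (κ → ℤ))) = 1 :=
    AddMonoidHom.toMultiplicative.symm.injective <| AddMonoidHom.functions_ext' _ _ _ fun t => by
      ext
      exact ha t
  apply toMonoidHom_injective
  rw [← MonoidHom.coprod_unique (toMonoidHom a), hS, hκ]
  ext g
  exact add_zero (0 : ℝ)

theorem hasNondegSkewStructure_prod (S : Type) [Group S] [Subsingleton (S →* Multiplicative ℝ)]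
    {ι : Type*} [Finite ι] (e : ι ⊕ ι ≃ κ) :
    HasNondegSkewStructure (S × Multiplicative (κ → ℤ)) := by
  have := Finite.of_equiv _ e
  refine hasNondegSkewStructure_of_commute
    (p := fun j => basisElem S (e (.inl j))) (q := fun j => basisElem S (e (.inr j)))
    (x := fun j => coordClass S (e (.inl j))) (y := fun j => coordClass S (e (.inr j)))
    (fun j => Commute.prod (Commute.one_left _) (Commute.all _ _))
    (by simp [coordClass_basisElem]) (by simp [coordClass_basisElem])
    (by simp [coordClass_basisElem]) (by simp [coordClass_basisElem]) fun a hp hq => ?_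
  refine eq_zero_of_apply_basisElem fun t => ?_
  obtain ⟨j | j, rfl⟩ := e.surjective t
  exacts [hp j, hq j]

end SkewStructure

end AcyclicExtension

open Monoid AcyclicExtension in
theorem groupCohomology_of_Gmnk_and_skew_structure_general {A B : Type} [Group A] [Group B]
    [Finite A] [Finite B] (k : ℕ) :
    (∀ i : ℕ, Nonempty
      (groupCohomology (Rep.trivial ℝ (Coprod A B × Multiplicative (Fin (2 * k) → ℤ)) ℝ) i ≃ₗ[ℝ]
        groupCohomology (Rep.trivial ℝ (Multiplicative (Fin (2 * k) → ℤ)) ℝ) i)) ∧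
    HasNondegSkewStructure (Coprod A B × Multiplicative (Fin (2 * k) → ℤ)) := by
  have isUnit_card (C : Type) [Group C] [Finite C] : IsUnit (Nat.card C : ℝ) :=
    .mk0 _ (Nat.cast_ne_zero.2 Nat.card_pos.ne')
  have hAB : IsAcyclic ℝ (Coprod A B) :=
    isAcyclic_coprod_of_finite (isUnit_card A) (isUnit_card B)
  exact ⟨fun i => ⟨groupCohomologyResSndEquiv hAB (Rep.trivial ℝ _ ℝ) i⟩,
    hasNondegSkewStructure_prod _ (finSumFinEquiv.trans (finCongr (two_mul k).symm))⟩

/-- Let `m` and `n` be positive composite integers and `k` a positive integer, and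
set `G_{m,n,k} = (ℤ/mℤ * ℤ/nℤ) × ℤ^{2k}`, where `*` denotes the free product.
Then for every `i ≥ 1` the group cohomology `H^i(G_{m,n,k}, ℝ)` is isomorphic to
`H^i(ℤ^{2k}, ℝ)`, and `G_{m,n,k}` admits a non-degenerate skew structure. -/
theorem groupCohomology_of_Gmnk_and_skew_structure
    (m n k : ℕ)
    (hm : ∃ a b : ℕ, 2 ≤ a ∧ 2 ≤ b ∧ m = a * b)
    (hn : ∃ a b : ℕ, 2 ≤ a ∧ 2 ≤ b ∧ n = a * b)
    (hk : 1 ≤ k) :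
    (∀ i : ℕ, 1 ≤ i →
      Nonempty
        ((groupCohomology
            (Rep.trivial ℝ
              ((Monoid.Coprod (Multiplicative (ZMod m)) (Multiplicative (ZMod n))) ×
                Multiplicative (Fin (2 * k) → ℤ)) ℝ) i) ≃ₗ[ℝ]
          (groupCohomology
            (Rep.trivial ℝ (Multiplicative (Fin (2 * k) → ℤ)) ℝ) i))) ∧
    HasNondegSkewStructure
      ((Monoid.Coprod (Multiplicative (ZMod m)) (Multiplicative (ZMod n))) ×
        Multiplicative (Fin (2 * k) → ℤ)) := by
  obtain ⟨a, b, ha, hb, rfl⟩ := hm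
  obtain ⟨c, d, hc, hd, rfl⟩ := hn
  have : NeZero (a * b) := ⟨by positivity⟩
  have : NeZero (c * d) := ⟨by positivity⟩
  have (l : ℕ) [NeZero l] : Finite (Multiplicative (ZMod l)) := inferInstanceAs (Finite (ZMod l))
  obtain ⟨hiso, hskew⟩ := groupCohomology_of_Gmnk_and_skew_structure_general
    (A := Multiplicative (ZMod (a * b))) (B := Multiplicative (ZMod (c * d))) k
  exact ⟨fun i _ => hiso i, hskew⟩
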